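/- arXiv:1707.01148 — 4 statements merged into one kernel-verified Lean document; each statement's English description precedes it below -/
import Mathlib

section
/- Let R be a commutative ring, let d, s, n be units of R, and let X be an R-module. Define binary operations on X by x ∗ y = -dsn²·x + n·y and x ⬝ y = d·x + s·y, together with division operations y \∗ z = n⁻¹·z + dsn·y, z /∗ y = -(dsn²)⁻¹·z + (dsn)⁻¹·y, y \ z = -ds⁻¹·y + s⁻¹·z, and z / y = d⁻¹·z - d⁻¹s·y. Then X is a biquasile under these operations; that is, for all x, y, a, b ∈ X: (i) y \∗ (y ∗ x) = x = (x ∗ y) /∗ y and y \ (y ⬝ x) = x = (x ⬝ y) / y, and (ii) a ∗ (x ⬝ (y ∗ (a ⬝ b))) = (a ∗ (x ⬝ y)) ∗ (x ⬝ (y ∗ ((a ∗ (x ⬝ y)) ⬝ b))) and y ∗ ((a ∗ (x ⬝ y)) ⬝ b) = (y ∗ (a ⬝ b)) ∗ ((a ∗ (x ⬝ (y ∗ (a ⬝ b)))) ⬝ b). -/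
/-!
Every identity is a comparison of coefficients of the free variables. The division laws use only
that `d`, `s`, `n` are units. For the exchange laws, the coefficient `-d s n²` of `∗` is chosen so
that `a ∗ (x ⬝ (y ∗ (a ⬝ b)))` does not depend on `a`. The first law compares two values of this
expression differing only in `a`, so it is immediate; substituting the resulting formula into the
second law leaves an identity of linear combinations.
-/


/-- An R-module X with the Alexander biquasile operations
    (for units d, s, n of a commutative ring R) is a biquasile:
    it satisfies biquasile axioms (i) and (ii). -/
theorem alexander_biquasile {R : Type*} [CommRing R] (d s n : Rˣ)
    {X : Type*} [AddCommGroup X] [Module R X]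
    (star dot lstar rstar ldiv rdiv : X → X → X)
    (hstar : ∀ x y : X, star x y = (-((d : R) * s * n ^ 2)) • x + (n : R) • y)
    (hdot : ∀ x y : X, dot x y = (d : R) • x + (s : R) • y)
    (hlstar : ∀ y z : X, lstar y z = ((n⁻¹ : Rˣ) : R) • z + ((d : R) * s * n) • y)
    (hrstar : ∀ z y : X, rstar z y =
      (-(((d * s * n ^ 2)⁻¹ : Rˣ) : R)) • z + (((d * s * n)⁻¹ : Rˣ) : R) • y)
    (hldiv : ∀ y z : X, ldiv y z =
      (-((d : R) * ((s⁻¹ : Rˣ) : R))) • y + ((s⁻¹ : Rˣ) : R) • z)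
    (hrdiv : ∀ z y : X, rdiv z y =
      ((d⁻¹ : Rˣ) : R) • z - (((d⁻¹ : Rˣ) : R) * (s : R)) • y) :
    (∀ x y : X,
      lstar y (star y x) = x ∧ rstar (star x y) y = x ∧
      ldiv y (dot y x) = x ∧ rdiv (dot x y) y = x) ∧
    (∀ x y a b : X,
      star a (dot x (star y (dot a b))) =
        star (star a (dot x y)) (dot x (star y (dot (star a (dot x y)) b))) ∧
      star y (dot (star a (dot x y)) b) =
        star (star y (dot a b)) (dot (star a (dot x (star y (dot a b)))) b)) := by
  refine ⟨fun x y => ?_, fun x y a b => ?_⟩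
  · have hd : ((d⁻¹ : Rˣ) : R) * d = 1 := d.inv_mul
    have hs : ((s⁻¹ : Rˣ) : R) * s = 1 := s.inv_mul
    have hn : ((n⁻¹ : Rˣ) : R) * n = 1 := n.inv_mul
    have hc : (((d * s * n ^ 2)⁻¹ : Rˣ) : R) * (d * s * n ^ 2) = 1 := by
      have h := Units.inv_mul (d * s * n ^ 2)
      rwa [Units.val_mul (d * s), Units.val_mul d, Units.val_pow_eq_pow_val] at h
    have hcn : (((d * s * n ^ 2)⁻¹ : Rˣ) : R) * n = (((d * s * n)⁻¹ : Rˣ) : R) := by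
      rw [← Units.val_mul]
      congr 1
      rw [inv_mul_eq_iff_eq_mul, eq_mul_inv_iff_mul_eq, pow_two]
      ac_rfl
    simp only [hstar, hdot, hlstar, hrstar, hldiv, hrdiv]
    refine ⟨?_, ?_, ?_, ?_⟩
    · match_scalars
      · linear_combination (-((d : R) * s * n)) * hn
      · linear_combination hn
    · match_scalars
      · linear_combination hc
      · linear_combination -hcn
    · match_scalars
      · ring
      · linear_combination hs
    · match_scalars
      · linear_combination hd
      · ring
  · -- The coefficient `-d s n²` cancels the `n² s d` produced by the inner occurrence of `a`.
    have absorb : ∀ x y a b : X, star a (dot x (star y (dot a b))) =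
        ((n : R) * d) • x - ((d : R) * s ^ 2 * n ^ 3) • y + ((n : R) ^ 2 * s ^ 2) • b := by
      intro x y a b
      simp only [hstar, hdot]
      module
    refine ⟨by rw [absorb, absorb], ?_⟩
    rw [absorb]
    simp only [hstar, hdot]
    module
end

section
/- Let R be a commutative ring, let d, s, n be units of R, and let X be an R-module with operations x ∗ y = -dsn²·x + n·y and x ⬝ y = d·x + s·y. Then for all x, y, a, b ∈ X: a ∗ (x ⬝ (y ∗ (a ⬝ b))) = (a ∗ (x ⬝ y)) ∗ (x ⬝ (y ∗ ((a ∗ (x ⬝ y)) ⬝ b))). -/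
/-- The first exchange law (biquasile axiom (ii)) holds for the
    Alexander biquasile operations on an R-module. -/
theorem alexander_exchange_one {R : Type*} [CommRing R] (d s n : Rˣ)
    {X : Type*} [AddCommGroup X] [Module R X]
    (star dot : X → X → X)
    (hstar : ∀ x y : X, star x y = (-((d : R) * s * n ^ 2)) • x + (n : R) • y)
    (hdot : ∀ x y : X, dot x y = (d : R) • x + (s : R) • y) :
    ∀ x y a b : X,
      star a (dot x (star y (dot a b))) =
        star (star a (dot x y)) (dot x (star y (dot (star a (dot x y)) b))) := by
  intro x y a b
  -- The coefficient of `c` in `star c (dot x (star y (dot c b)))` is `-dsn² + n * s * n * d = 0`,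
  -- so both sides are the value of one expression independent of `c`.
  have key : ∀ c : X, star c (dot x (star y (dot c b))) =
      ((n : R) * d) • x + ((n : R) * s * -((d : R) * s * n ^ 2)) • y
        + ((n : R) * s * n * s) • b := by
    intro c
    simp only [hstar, hdot]
    module
  rw [key, key]
end

section
/- Let R be a commutative ring, let d, s, n be units of R, and let X be an R-module with operations x ∗ y = -dsn²·x + n·y and x ⬝ y = d·x + s·y. Then for all x, y, a, b ∈ X: y ∗ ((a ∗ (x ⬝ y)) ⬝ b) = (y ∗ (a ⬝ b)) ∗ ((a ∗ (x ⬝ (y ∗ (a ⬝ b)))) ⬝ b). -/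
/-- The second exchange law (biquasile axiom (ii)) holds for the
    Alexander biquasile operations on an R-module. -/
theorem alexander_exchange_two {R : Type*} [CommRing R] (d s n : Rˣ)
    {X : Type*} [AddCommGroup X] [Module R X]
    (star dot : X → X → X)
    (hstar : ∀ x y : X, star x y = (-((d : R) * s * n ^ 2)) • x + (n : R) • y)
    (hdot : ∀ x y : X, dot x y = (d : R) • x + (s : R) • y) :
    ∀ x y a b : X,
      star y (dot (star a (dot x y)) b) =
        star (star y (dot a b)) (dot (star a (dot x (star y (dot a b)))) b) := by
  intro x y a b
  -- Both sides have the form `star w (dot (star a (dot x w)) b)`, where the coefficient of `w` is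
  -- `-d s n ^ 2 + n * d * s * n = 0`; hence the value does not depend on `w`.
  simp only [hstar, hdot]
  module
end

section
/- The set of tuples (x₁, x₂, x₃, x₄, x₅) ∈ (ℤ/7ℤ)⁵ satisfying the four linear equations 5x₁ + 5x₂ + 6x₄ + x₅ = 0, 6x₁ + 5x₂ + 5x₄ + x₅ = 0, 5x₁ + 5x₂ + 6x₃ + x₅ = 0, and 6x₁ + 5x₂ + 5x₃ + x₅ = 0 has exactly 49 elements. -/
/-- The solution set in (ZMod 7)⁵ of the four biquasile coloring
    equations for the surface-link 6₁ has exactly 49 elements. -/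
theorem coloring_count_six_one :
    Set.ncard {p : ZMod 7 × ZMod 7 × ZMod 7 × ZMod 7 × ZMod 7 |
      5 * p.1 + 5 * p.2.1 + 6 * p.2.2.2.1 + p.2.2.2.2 = 0 ∧
      6 * p.1 + 5 * p.2.1 + 5 * p.2.2.2.1 + p.2.2.2.2 = 0 ∧
      5 * p.1 + 5 * p.2.1 + 6 * p.2.2.1 + p.2.2.2.2 = 0 ∧
      6 * p.1 + 5 * p.2.1 + 5 * p.2.2.1 + p.2.2.2.2 = 0} = 49 := by
  -- Subtracting the equations in pairs gives x₄ = x₁ and x₃ = x₁; all four then reduce to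
  -- 11 x₁ + 5 x₂ + x₅ = 0, so the solutions are parametrized by (x₁, x₂).
  let f : ZMod 7 × ZMod 7 → ZMod 7 × ZMod 7 × ZMod 7 × ZMod 7 × ZMod 7 :=
    fun q => (q.1, q.2, q.1, q.1, -(11 * q.1 + 5 * q.2))
  have hf : Function.Injective f := by
    rintro ⟨a, b⟩ ⟨c, d⟩ h
    simp only [f, Prod.mk.injEq] at h
    exact Prod.ext h.1 h.2.1
  trans (Set.range f).ncard
  · congr 1
    ext ⟨a, b, c, d, e⟩
    simp only [Set.mem_ofPred_eq, Set.mem_range, f, Prod.exists, Prod.mk.injEq]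
    constructor
    · rintro ⟨h1, h2, h3, h4⟩
      refine ⟨a, b, rfl, rfl, ?_, ?_, ?_⟩
      · linear_combination h4 - h3
      · linear_combination h2 - h1
      · linear_combination -6 * h2 + 5 * h1
    · rintro ⟨_, _, rfl, rfl, rfl, rfl, rfl⟩
      refine ⟨?_, ?_, ?_, ?_⟩ <;> ring
  · rw [← Set.image_univ, Set.ncard_image_of_injective _ hf, Set.ncard_univ,
      Nat.card_prod, Nat.card_zmod]
end
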